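/- Let A ∈ (2,∞) and B ∈ [0,∞) with A + min{1,B} > 3. Then there exists a constant C = C(A,B) > 0 such that for all x ∈ ℝ³: ∫_{ℝ³} [(1+|x−y|)(1+s(x−y))]^{−3/2} (1+|y|)^{−A} (1+s(y))^{−B} dy ≤ C (1+|x|)^{−3/2}. -/

import Mathlib

open MeasureTheory Real Set

noncomputable section

/-- Three-dimensional Euclidean space. -/
abbrev E3 : Type := EuclideanSpace ℝ (Fin 3)

/-- The wake function `s(x) = |x| + x₁`. -/
def wake (x : E3) : ℝ := ‖x‖ + x 0

/-- The `j`-th standard basis vector of `ℝ³`. -/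
def e3 (j : Fin 3) : E3 := EuclideanSpace.single j 1

/-- Euclidean norm of a triple of reals. -/
def vnorm (v : Fin 3 → ℝ) : ℝ := Real.sqrt (∑ i, v i ^ 2)

/-- Integrable product majorant. -/
def Gq (q : ℝ) (y : E3) : ℝ := ∏ i, (1 + ‖y i‖) ^ (-q)

theorem Gq_nonneg (q : ℝ) (y : E3) : 0 ≤ Gq q y :=
  Finset.prod_nonneg fun i _ => by positivity

theorem Gq_integrable {q : ℝ} (hq : 1 < q) : Integrable (Gq q) := by
  have h1 : Integrable (fun t : ℝ => (1 + ‖t‖) ^ (-q)) :=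
    integrable_one_add_norm (by simpa using hq)
  have h2 : Integrable (fun v : Fin 3 → ℝ => ∏ i, (1 + ‖v i‖) ^ (-q)) :=
    Integrable.fintype_prod (f := fun _ t => (1 + ‖t‖) ^ (-q)) (fun _ => h1)
  exact (EuclideanSpace.volume_preserving_symm_measurableEquiv_toLp (Fin 3)).integrable_comp_of_integrable h2

theorem Gq_eq (q : ℝ) (y : E3) :
    Gq q y = (1 + |y 0|) ^ (-q) * (1 + |y 1|) ^ (-q) * (1 + |y 2|) ^ (-q) := by
  simp [Gq, Fin.prod_univ_three]

theorem coord_le (y : E3) (i : Fin 3) : |y i| ≤ ‖y‖ := by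
  simpa using PiLp.norm_apply_le y i

theorem wake_nonneg (y : E3) : 0 ≤ wake y := by
  have := neg_abs_le (y 0)
  have := coord_le y 0
  unfold wake; linarith

theorem norm_sq3 (y : E3) : ‖y‖ ^ 2 = y 0 ^ 2 + y 1 ^ 2 + y 2 ^ 2 := by
  simp [EuclideanSpace.norm_sq_eq, Fin.sum_univ_three]

/-- The anisotropic weight dominates the transversal coordinates. -/
theorem M_ge (y : E3) :
    (1 + |y 1|) * (1 + |y 2|) ≤ 4 * ((1 + ‖y‖) * (1 + wake y)) := by
  have h0 := norm_sq3 y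
  have hw := wake_nonneg y
  have hn := norm_nonneg y
  have h1 : ‖y‖ * wake y ≥ (y 1 ^ 2 + y 2 ^ 2) / 2 := by
    unfold wake; nlinarith [sq_nonneg (‖y‖ + y 0)]
  have h2 := sq_abs (y 1)
  have h3 := sq_abs (y 2)
  nlinarith [sq_nonneg (|y 1| - |y 2|), sq_nonneg (|y 1| - 1), sq_nonneg (|y 2| - 1)]

theorem M_ge1 (y : E3) : 1 + ‖y‖ ≤ (1 + ‖y‖) * (1 + wake y) := by
  nlinarith [wake_nonneg y, norm_nonneg y]

theorem M_rpow (y : E3) {c : ℝ} (hc : 0 ≤ c) :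
    ((1 + ‖y‖) * (1 + wake y)) ^ (-c) ≤
      (4 : ℝ) ^ c * ((1 + |y 1|) ^ (-c) * (1 + |y 2|) ^ (-c)) := by
  have hw := wake_nonneg y
  have h := rpow_le_rpow_of_nonpos (z := -c)
    (by positivity : 0 < (1 + |y 1|) * (1 + |y 2|)) (M_ge y) (by linarith)
  rw [mul_rpow (by norm_num) (by positivity), rpow_neg (by norm_num : (0:ℝ) ≤ 4)] at h
  have h4 : (0:ℝ) < 4 ^ c := by positivity
  rwa [inv_mul_le_iff₀ h4, mul_rpow (x := 1 + |y 1|) (by positivity) (by positivity)] at h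

theorem near_bound {A B δ : ℝ} (hA : 2 < A) (hB : 0 ≤ B) (hδ : 0 < δ) (hδ1 : δ ≤ 1 / 4)
    (hδ2 : 2 * δ ≤ A - 2) (x y : E3) (h : ‖x - y‖ ≤ ‖x‖ / 2) :
    ((1 + ‖x - y‖) * (1 + wake (x - y))) ^ (-(3/2 : ℝ)) *
          (1 + ‖y‖) ^ (-A) * (1 + wake y) ^ (-B) ≤
      ((4 : ℝ) ^ (1 + δ) * 2 ^ A) * (1 + ‖x‖) ^ (-(3/2 : ℝ)) * Gq (1 + δ) (x - y) := by
  set z := x - y with hz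
  have hwz := wake_nonneg z
  have hwy := wake_nonneg y
  have hM := M_ge1 z
  have hM0 : 0 < (1 + ‖z‖) * (1 + wake z) := by positivity
  have hx1 : (1 : ℝ) ≤ 1 + ‖x‖ := by linarith [norm_nonneg x]
  have hQ0 := coord_le z 0
  have hxy : ‖x‖ ≤ ‖z‖ + ‖y‖ := by
    have := norm_add_le z y
    simpa [hz] using this
  -- wake factor
  have e1 : (1 + wake y) ^ (-B) ≤ 1 := rpow_le_one_of_one_le_of_nonpos (by linarith) (by linarith)
  -- norm factor
  have e2 : (1 + ‖y‖) ^ (-A) ≤ 2 ^ A * (1 + ‖x‖) ^ (-A) := by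
    have := rpow_le_rpow_of_nonpos (z := -A) (by positivity : 0 < (1 + ‖x‖) / 2)
      (by linarith : (1 + ‖x‖) / 2 ≤ 1 + ‖y‖) (by linarith)
    rw [div_rpow (by positivity) (by norm_num), rpow_neg (by norm_num : (0:ℝ) ≤ 2), div_inv_eq_mul] at this
    linarith
  -- kernel
  have e3 : ((1 + ‖z‖) * (1 + wake z)) ^ (-(1/2 - δ)) ≤
      (1 + |z 0|) ^ (-(1 + δ)) * (1 + ‖x‖) ^ (1/2 + 2 * δ) := by
    calc ((1 + ‖z‖) * (1 + wake z)) ^ (-(1/2 - δ)) ≤ (1 + |z 0|) ^ (-(1/2 - δ)) :=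
          rpow_le_rpow_of_nonpos (by positivity) (by linarith) (by linarith)
      _ = (1 + |z 0|) ^ (-(1 + δ)) * (1 + |z 0|) ^ (1/2 + 2 * δ) := by
          rw [← rpow_add (by positivity)]; congr 1; ring
      _ ≤ _ := by
          gcongr
          linarith [norm_nonneg x]
  have e4 : ((1 + ‖z‖) * (1 + wake z)) ^ (-(3/2 : ℝ)) ≤
      4 ^ (1 + δ) * (1 + ‖x‖) ^ (1/2 + 2 * δ) * Gq (1 + δ) z := by
    have : (-(3/2 : ℝ)) = -(1 + δ) + -(1/2 - δ) := by ring
    rw [this, rpow_add hM0]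
    calc _ ≤ (4 ^ (1 + δ) * ((1 + |z 1|) ^ (-(1 + δ)) * (1 + |z 2|) ^ (-(1 + δ)))) *
          ((1 + |z 0|) ^ (-(1 + δ)) * (1 + ‖x‖) ^ (1/2 + 2 * δ)) := by
          apply mul_le_mul (M_rpow z (by linarith)) e3 <;> positivity
      _ = _ := by rw [Gq_eq]; ring
  have e5 : (1 + ‖x‖) ^ (1/2 + 2 * δ) * (1 + ‖x‖) ^ (-A) ≤ (1 + ‖x‖) ^ (-(3/2 : ℝ)) := by
    rw [← rpow_add (by positivity)]
    exact rpow_le_rpow_of_exponent_le hx1 (by linarith)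
  have hG := Gq_nonneg (1 + δ) z
  calc _ ≤ (4 ^ (1 + δ) * (1 + ‖x‖) ^ (1/2 + 2 * δ) * Gq (1 + δ) z) *
        (2 ^ A * (1 + ‖x‖) ^ (-A)) * 1 := by
        apply mul_le_mul _ e1 (by positivity) (by positivity)
        apply mul_le_mul e4 e2 <;> positivity
    _ = ((4 : ℝ) ^ (1 + δ) * 2 ^ A) *
        ((1 + ‖x‖) ^ (1/2 + 2 * δ) * (1 + ‖x‖) ^ (-A)) * Gq (1 + δ) z := by ring
    _ ≤ _ := by gcongr

theorem far_bound {A B b δ : ℝ} (hb : 0 ≤ b) (hb1 : b ≤ 1) (hbB : b ≤ B) (hδ : 0 < δ)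
    (hδ2 : 3 * δ ≤ A + b - 3) (x y : E3) (h : ‖x‖ / 2 ≤ ‖x - y‖) :
    ((1 + ‖x - y‖) * (1 + wake (x - y))) ^ (-(3/2 : ℝ)) *
          (1 + ‖y‖) ^ (-A) * (1 + wake y) ^ (-B) ≤
      ((4 : ℝ) ^ b * 2 ^ (3/2 : ℝ)) * (1 + ‖x‖) ^ (-(3/2 : ℝ)) * Gq (1 + δ) y := by
  set z := x - y with hz
  have hwz := wake_nonneg z
  have hwy := wake_nonneg y
  have hM := M_ge1 z
  have e1 : ((1 + ‖z‖) * (1 + wake z)) ^ (-(3/2 : ℝ)) ≤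
      2 ^ (3/2 : ℝ) * (1 + ‖x‖) ^ (-(3/2 : ℝ)) := by
    have := rpow_le_rpow_of_nonpos (z := -(3/2 : ℝ)) (by positivity : 0 < (1 + ‖x‖) / 2)
      (by linarith : (1 + ‖x‖) / 2 ≤ (1 + ‖z‖) * (1 + wake z)) (by norm_num)
    rw [div_rpow (by positivity) (by norm_num), rpow_neg (by norm_num : (0:ℝ) ≤ 2), div_inv_eq_mul] at this
    linarith
  have e2 : (1 + wake y) ^ (-B) ≤ (1 + wake y) ^ (-b) :=
    rpow_le_rpow_of_exponent_le (by linarith) (by linarith)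
  have hq : ∀ (i : Fin 3) (c : ℝ), 0 ≤ c → (1 + ‖y‖) ^ (-c) ≤ (1 + |y i|) ^ (-c) := fun i c hc =>
    rpow_le_rpow_of_nonpos (by positivity) (by linarith [coord_le y i]) (by linarith)
  have e3 : (1 + ‖y‖) ^ (-(A + b - 2 - 2 * δ)) ≤ (1 + |y 0|) ^ (-(1 + δ)) :=
    (hq 0 _ (by linarith)).trans
      (rpow_le_rpow_of_exponent_le (by linarith [abs_nonneg (y 0)]) (by linarith))
  have e4 : ∀ i : Fin 3, (1 + ‖y‖) ^ (-(1 + δ - b)) * (1 + |y i|) ^ (-b) ≤ (1 + |y i|) ^ (-(1 + δ)) := by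
    intro i
    calc _ ≤ (1 + |y i|) ^ (-(1 + δ - b)) * (1 + |y i|) ^ (-b) := by
          have := hq i (1 + δ - b) (by linarith)
          gcongr
      _ = _ := by rw [← rpow_add (by positivity)]; congr 1; ring
  have e5 : (1 + ‖y‖) ^ (-A) * (1 + wake y) ^ (-b) ≤ 4 ^ b * Gq (1 + δ) y := by
    have hy : (0 : ℝ) < 1 + ‖y‖ := by positivity
    have s1 : (1 + ‖y‖) ^ (-A) = (1 + ‖y‖) ^ (-(A + b - 2 - 2 * δ)) *
        (1 + ‖y‖) ^ (-(1 + δ - b)) * (1 + ‖y‖) ^ (-(1 + δ - b)) * (1 + ‖y‖) ^ (-b) := by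
      rw [← rpow_add hy, ← rpow_add hy, ← rpow_add hy]; congr 1; ring
    have s2 := M_rpow y hb
    rw [mul_rpow (by positivity) (by positivity)] at s2
    calc _ = (1 + ‖y‖) ^ (-(A + b - 2 - 2 * δ)) * (1 + ‖y‖) ^ (-(1 + δ - b)) *
          (1 + ‖y‖) ^ (-(1 + δ - b)) * ((1 + ‖y‖) ^ (-b) * (1 + wake y) ^ (-b)) := by
          rw [s1]; ring
      _ ≤ (1 + ‖y‖) ^ (-(A + b - 2 - 2 * δ)) * (1 + ‖y‖) ^ (-(1 + δ - b)) *
          (1 + ‖y‖) ^ (-(1 + δ - b)) *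
            ((4 : ℝ) ^ b * ((1 + |y 1|) ^ (-b) * (1 + |y 2|) ^ (-b))) := by gcongr
      _ = 4 ^ b * ((1 + ‖y‖) ^ (-(A + b - 2 - 2 * δ)) *
          ((1 + ‖y‖) ^ (-(1 + δ - b)) * (1 + |y 1|) ^ (-b)) *
          ((1 + ‖y‖) ^ (-(1 + δ - b)) * (1 + |y 2|) ^ (-b))) := by ring
      _ ≤ _ := by
          rw [Gq_eq]
          have := e4 1
          have := e4 2
          gcongr
  have hG := Gq_nonneg (1 + δ) y
  calc _ = ((1 + ‖z‖) * (1 + wake z)) ^ (-(3/2 : ℝ)) *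
        ((1 + ‖y‖) ^ (-A) * (1 + wake y) ^ (-B)) := by ring
    _ ≤ (2 ^ (3/2 : ℝ) * (1 + ‖x‖) ^ (-(3/2 : ℝ))) * (4 ^ b * Gq (1 + δ) y) := by
        apply mul_le_mul e1 _ (by positivity) (by positivity)
        refine le_trans ?_ e5
        gcongr
    _ = _ := by ring

/-- **Anisotropic convolution estimate:** for `A > 2`, `B ≥ 0` with `A + min{1,B} > 3`,
`∫ [(1+|x−y|)(1+s(x−y))]^{−3/2}(1+|y|)^{−A}(1+s(y))^{−B} dy ≤ C (1+|x|)^{−3/2}`. -/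
theorem conv_anisotropic_threehalves (A B : ℝ) (hA : 2 < A) (hB : 0 ≤ B)
    (hAB : 3 < A + min 1 B) :
    ∃ C > 0, ∀ x : E3,
      (∫ y : E3, ((1 + ‖x - y‖) * (1 + wake (x - y))) ^ (-(3/2 : ℝ)) *
          (1 + ‖y‖) ^ (-A) * (1 + wake y) ^ (-B)) ≤
        C * (1 + ‖x‖) ^ (-(3/2 : ℝ)) := by
  set b := min 1 B with hbdef
  have hb1 : b ≤ 1 := min_le_left _ _
  have hbB : b ≤ B := min_le_right _ _
  have hb : 0 ≤ b := le_min zero_le_one hB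
  obtain ⟨δ, hδ, hδ1, hδ2, hδ3⟩ :
      ∃ δ : ℝ, 0 < δ ∧ δ ≤ 1 / 4 ∧ 2 * δ ≤ A - 2 ∧ 3 * δ ≤ A + b - 3 := by
    refine ⟨min (1/4) (min ((A - 2) / 2) ((A + b - 3) / 3)), ?_, min_le_left _ _, ?_, ?_⟩
    · refine lt_min (by norm_num) (lt_min ?_ ?_) <;> linarith
    · have := (min_le_right (1/4) (min ((A - 2) / 2) ((A + b - 3) / 3))).trans (min_le_left _ _)
      linarith
    · have := (min_le_right (1/4) (min ((A - 2) / 2) ((A + b - 3) / 3))).trans (min_le_right _ _)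
      linarith
  set K1 : ℝ := (4 : ℝ) ^ (1 + δ) * 2 ^ A with hK1
  set K2 : ℝ := (4 : ℝ) ^ b * 2 ^ (3/2 : ℝ) with hK2
  have hK1p : 0 ≤ K1 := by positivity
  have hK2p : 0 ≤ K2 := by positivity
  have hGi : Integrable (Gq (1 + δ)) := Gq_integrable (by linarith)
  set I : ℝ := ∫ y, Gq (1 + δ) y with hI
  have hI0 : 0 ≤ I := integral_nonneg (Gq_nonneg _)
  refine ⟨(K1 + K2) * I + 1, by positivity, fun x => ?_⟩
  have hGx : Integrable (fun y => Gq (1 + δ) (x - y)) := hGi.comp_sub_left x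
  have hGxI : ∫ y, Gq (1 + δ) (x - y) = I := integral_sub_left_eq_self _ _ x
  have hX : (0 : ℝ) ≤ (1 + ‖x‖) ^ (-(3/2 : ℝ)) := by positivity
  calc _ ≤ ∫ y : E3, (K1 * (1 + ‖x‖) ^ (-(3/2 : ℝ)) * Gq (1 + δ) (x - y) +
        K2 * (1 + ‖x‖) ^ (-(3/2 : ℝ)) * Gq (1 + δ) y) := by
        apply integral_mono_of_nonneg
        · refine Filter.Eventually.of_forall fun y => ?_
          have := wake_nonneg y
          have := wake_nonneg (x - y)
          simp only [Pi.zero_apply]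
          positivity
        · exact (hGx.const_mul _).add (hGi.const_mul _)
        · refine Filter.Eventually.of_forall fun y => ?_
          have g1 := Gq_nonneg (1 + δ) y
          have g2 := Gq_nonneg (1 + δ) (x - y)
          have p1 : 0 ≤ K1 * (1 + ‖x‖) ^ (-(3/2 : ℝ)) * Gq (1 + δ) (x - y) := by positivity
          have p2 : 0 ≤ K2 * (1 + ‖x‖) ^ (-(3/2 : ℝ)) * Gq (1 + δ) y := by positivity
          rcases le_total ‖x - y‖ (‖x‖ / 2) with h | h
          · exact (near_bound hA hB hδ hδ1 hδ2 x y h).trans (by linarith)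
          · exact (far_bound hb hb1 hbB hδ hδ3 x y h).trans (by linarith)
    _ = (K1 + K2) * I * (1 + ‖x‖) ^ (-(3/2 : ℝ)) := by
        rw [integral_add (hGx.const_mul _) (hGi.const_mul _), integral_const_mul,
          integral_const_mul, hGxI]
        ring
    _ ≤ _ := by nlinarith

end
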